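/- Let ρ_i (i in a finite index set) be positive semidefinite operators and ρ = Σ_i ρ_i. Then for α > 1, Σ_i tr((ρ^{−β/(2α)} ρ_i ρ^{−β/(2α)})^α) ≤ tr(ρ), where β = α − 1. -/

import Mathlib

open scoped Matrix BigOperators Classical ComplexOrder

noncomputable section

/-- Real part of the trace of a complex matrix. -/
def rtr {d : ℕ} (M : Matrix (Fin d) (Fin d) ℂ) : ℝ := (Matrix.trace M).re

/-- Functional calculus applied to a matrix (junk value `0` if the matrix is not Hermitian). -/
def mfun {d : ℕ} (f : ℝ → ℝ) (A : Matrix (Fin d) (Fin d) ℂ) : Matrix (Fin d) (Fin d) ℂ :=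
  if h : A.IsHermitian then h.cfc f else 0

/-- Positive part `[A]₊` of a Hermitian matrix. -/
def posPartM {d : ℕ} (A : Matrix (Fin d) (Fin d) ℂ) : Matrix (Fin d) (Fin d) ℂ :=
  mfun (fun x => max x 0) A

/-- Projector onto the support of the positive part of a Hermitian matrix. -/
def posSuppProj {d : ℕ} (A : Matrix (Fin d) (Fin d) ℂ) : Matrix (Fin d) (Fin d) ℂ :=
  mfun (fun x => if 0 < x then 1 else 0) A

/-- Operator absolute value of a Hermitian matrix. -/
def absM {d : ℕ} (A : Matrix (Fin d) (Fin d) ℂ) : Matrix (Fin d) (Fin d) ℂ :=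
  mfun (fun x => |x|) A

/-- Moore–Penrose (relative) power of a Hermitian matrix: `x ↦ x ^ p` on the support,
`0` on the kernel. -/
def mpow {d : ℕ} (A : Matrix (Fin d) (Fin d) ℂ) (p : ℝ) : Matrix (Fin d) (Fin d) ℂ :=
  mfun (fun x => if x = 0 then 0 else x ^ p) A

/-- Support containment: the kernel of `σ` is contained in the kernel of `ρ`,
i.e. `supp ρ ⊆ supp σ` for positive semidefinite matrices. -/
def suppSubset {d : ℕ} (ρ σ : Matrix (Fin d) (Fin d) ℂ) : Prop :=
  ∀ v : Fin d → ℂ, σ.mulVec v = 0 → ρ.mulVec v = 0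

/-- Sandwiched Rényi power `R_α(ρ|σ) = tr((σ^{-β/(2α)} ρ σ^{-β/(2α)})^α)`, `β = α - 1`. -/
def sandR {d : ℕ} (α : ℝ) (ρ σ : Matrix (Fin d) (Fin d) ℂ) : ℝ :=
  rtr (mpow (mpow σ (-(α - 1) / (2 * α)) * ρ * mpow σ (-(α - 1) / (2 * α))) α)

/-- Petz Rényi power `tr(ρ^α σ^{-β})`, `β = α - 1`. -/
def petzR {d : ℕ} (α : ℝ) (ρ σ : Matrix (Fin d) (Fin d) ℂ) : ℝ :=
  rtr (mpow ρ α * mpow σ (-(α - 1)))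

/-!
The sandwiched Rényi power is antitone in its second argument. Given `0 ≤ σ ≤ σ'`, write
`τ = star C * C`; cyclicity of the spectrum turns `R_α(τ|σ)` into
`tr ((C * σ ^ (-(β / α)) * star C) ^ α)`. Since `β / α ∈ (0, 1)`, the Löwner–Heinz inequality makes
`σ' ^ (-(β / (2α))) * σ ^ (β / (2α))` a contraction, which bounds the operator inside the trace when
`ker σ ⊆ ker C`, and `X ↦ tr (X ^ α)` is monotone by Jensen's inequality applied to diagonal entries
in an eigenbasis. Now compare `σ' = Σ_j ρ_j` with `σ = ρ_i`: each summand is at most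
`R_α(ρ_i|ρ_i) = tr ρ_i`.
-/

open scoped MatrixOrder Matrix.Norms.L2Operator

lemma star_mul_self_le_one_iff {A : Type*} [CStarAlgebra A] [PartialOrder A] [StarOrderedRing A]
    {a : A} : star a * a ≤ 1 ↔ a * star a ≤ 1 := by
  rw [← CStarAlgebra.norm_le_one_iff_of_nonneg (star a * a),
    ← CStarAlgebra.norm_le_one_iff_of_nonneg (a * star a),
    CStarRing.norm_star_mul_self, CStarRing.norm_self_mul_star]

section TraceInequalities

variable {n 𝕜 : Type*} [Fintype n] [DecidableEq n] [RCLike 𝕜] {A B : Matrix n n 𝕜}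
  {f : ℝ → ℝ} {s : Set ℝ}

lemma trace_cfc_eq_sum_eigenvalues (hA : A.IsHermitian) (f : ℝ → ℝ) :
    (cfc f A).trace = ∑ i, (f (hA.eigenvalues i) : 𝕜) := by
  rw [hA.cfc_eq, Matrix.IsHermitian.cfc, Unitary.conjStarAlgAut_apply, Matrix.trace_mul_cycle,
    Unitary.coe_star_mul_self, one_mul, Matrix.trace_diagonal]
  rfl

lemma trace_cfc_eq_of_charpoly_eq (hA : A.IsHermitian) (hB : B.IsHermitian)
    (h : A.charpoly = B.charpoly) (f : ℝ → ℝ) : (cfc f A).trace = (cfc f B).trace := by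
  rw [trace_cfc_eq_sum_eigenvalues hA, trace_cfc_eq_sum_eigenvalues hB,
    (hA.eigenvalues_eq_eigenvalues_iff hB).2 h]

lemma re_cfc_apply_self (hA : A.IsHermitian) (f : ℝ → ℝ) (i : n) :
    RCLike.re (cfc f A i i) =
      ∑ j, ‖(hA.eigenvectorUnitary : Matrix n n 𝕜) i j‖ ^ 2 • f (hA.eigenvalues j) := by
  rw [hA.cfc_eq, Matrix.IsHermitian.cfc, Unitary.conjStarAlgAut_apply, Matrix.mul_apply, map_sum]
  refine Finset.sum_congr rfl fun j _ ↦ ?_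
  rw [Matrix.mul_diagonal, mul_right_comm, Matrix.star_apply, RCLike.star_def, RCLike.mul_conj]
  simp only [Function.comp_apply, smul_eq_mul]
  norm_cast

lemma re_apply_self_eq_sum (hA : A.IsHermitian) (i : n) :
    RCLike.re (A i i) =
      ∑ j, ‖(hA.eigenvectorUnitary : Matrix n n 𝕜) i j‖ ^ 2 • hA.eigenvalues j := by
  simpa only [cfc_id' ℝ A hA.isSelfAdjoint] using re_cfc_apply_self hA (fun x ↦ x) i

lemma sum_norm_sq_eigenvectorUnitary (hA : A.IsHermitian) (i : n) :
    ∑ j, ‖(hA.eigenvectorUnitary : Matrix n n 𝕜) i j‖ ^ 2 = 1 := by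
  simpa [cfc_const_one ℝ A hA.isSelfAdjoint] using (re_cfc_apply_self hA (fun _ ↦ 1) i).symm

lemma re_apply_self_mem (hA : A.IsHermitian) (hs : Convex ℝ s) (hAs : spectrum ℝ A ⊆ s) (i : n) :
    RCLike.re (A i i) ∈ s := by
  rw [re_apply_self_eq_sum hA]
  exact hs.sum_mem (fun _ _ ↦ by positivity) (sum_norm_sq_eigenvectorUnitary hA i)
    fun j _ ↦ hAs (hA.eigenvalues_mem_spectrum_real j)

lemma map_re_apply_self_le (hA : A.IsHermitian) (hf : ConvexOn ℝ s f) (hAs : spectrum ℝ A ⊆ s)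
    (i : n) : f (RCLike.re (A i i)) ≤ RCLike.re (cfc f A i i) := by
  rw [re_apply_self_eq_sum hA, re_cfc_apply_self hA]
  exact hf.map_sum_le (fun _ _ ↦ by positivity) (sum_norm_sq_eigenvectorUnitary hA i)
    fun j _ ↦ hAs (hA.eigenvalues_mem_spectrum_real j)

lemma re_trace_cfc_mono (hA : A.IsHermitian) (hB : B.IsHermitian) (hf : ConvexOn ℝ s f)
    (hmono : MonotoneOn f s) (hAs : spectrum ℝ A ⊆ s) (hBs : spectrum ℝ B ⊆ s) (hAB : A ≤ B) :
    RCLike.re (cfc f A).trace ≤ RCLike.re (cfc f B).trace := by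
  set φ := Unitary.conjStarAlgAut 𝕜 (Matrix n n 𝕜) (star hA.eigenvectorUnitary)
  have hφB : (φ B).IsHermitian := hB.isSelfAdjoint.map φ
  have hφBs : spectrum ℝ (φ B) ⊆ s := by
    simpa [φ, Unitary.conjStarAlgAut_apply] using hBs
  have hle (i : n) : hA.eigenvalues i ≤ RCLike.re (φ B i i) := by
    have hdiag : 0 ≤ (φ B - φ A) i i := by
      rw [← map_sub]
      exact (Matrix.nonneg_iff_posSemidef.1 (map_nonneg φ (sub_nonneg.2 hAB))).diag_nonneg
    rw [hA.conjStarAlgAut_star_eigenvectorUnitary] at hdiag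
    simpa using (RCLike.nonneg_iff.1 hdiag).1
  have htrace : (cfc f (φ B)).trace = (cfc f B).trace := by
    refine trace_cfc_eq_of_charpoly_eq hφB hB ?_ f
    rw [Unitary.conjStarAlgAut_apply, Matrix.charpoly_mul_comm, ← mul_assoc]
    simp
  calc RCLike.re (cfc f A).trace = ∑ i, f (hA.eigenvalues i) := by
        simp [trace_cfc_eq_sum_eigenvalues hA]
    _ ≤ ∑ i, f (RCLike.re (φ B i i)) := Finset.sum_le_sum fun i _ ↦
        hmono (hAs (hA.eigenvalues_mem_spectrum_real i)) (re_apply_self_mem hφB hf.1 hφBs i) (hle i)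
    _ ≤ ∑ i, RCLike.re (cfc f (φ B) i i) :=
        Finset.sum_le_sum fun i _ ↦ map_re_apply_self_le hφB hf hφBs i
    _ = RCLike.re (cfc f B).trace := by rw [← htrace, Matrix.trace, map_sum]; rfl

end TraceInequalities

section Rpow

variable {n 𝕜 : Type*} [Fintype n] [DecidableEq n] [RCLike 𝕜] {A B : Matrix n n 𝕜} {p q : ℝ}

lemma rpow_mul_rpow (hA : 0 ≤ A) (h : p + q ≠ 0) : A ^ p * A ^ q = A ^ (p + q) := by
  rw [CFC.rpow_eq_cfc_real hA, CFC.rpow_eq_cfc_real hA, CFC.rpow_eq_cfc_real hA,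
    ← cfc_mul _ _ A (A.finite_real_spectrum.continuousOn _) (A.finite_real_spectrum.continuousOn _)]
  exact cfc_congr fun x hx ↦ (Real.rpow_add' (spectrum_nonneg_of_nonneg hA hx) h).symm

-- On matrices `CFC.rpow` takes `0 ^ p = 0` for `p ≠ 0` even when `p < 0`, so `A ^ (-p)` inverts
-- `A ^ p` only on the support of `A`.
lemma rpow_mul_rpow_neg_le_one (hA : 0 ≤ A) (p : ℝ) : A ^ p * A ^ (-p) ≤ 1 := by
  rw [CFC.rpow_eq_cfc_real hA, CFC.rpow_eq_cfc_real hA,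
    ← cfc_mul _ _ A (A.finite_real_spectrum.continuousOn _) (A.finite_real_spectrum.continuousOn _)]
  refine cfc_le_one _ A fun x hx ↦ ?_
  rw [Real.rpow_neg (spectrum_nonneg_of_nonneg hA hx)]
  exact mul_inv_le_one

lemma mul_rpow_mul_rpow_neg (hA : 0 ≤ A) (p : ℝ) : A * (A ^ p * A ^ (-p)) = A := by
  have hcont (f : ℝ → ℝ) : ContinuousOn f (spectrum ℝ A) := A.finite_real_spectrum.continuousOn f
  rw [CFC.rpow_eq_cfc_real hA, CFC.rpow_eq_cfc_real hA, ← cfc_mul _ _ A (hcont _) (hcont _)]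
  nth_rw 1 3 [← cfc_id' ℝ A]
  rw [← cfc_mul _ _ A (hcont _) (hcont _)]
  refine cfc_congr fun x hx ↦ ?_
  rcases (spectrum_nonneg_of_nonneg hA hx).eq_or_lt with rfl | hx
  · simp
  · simp [Real.rpow_neg hx.le, (Real.rpow_pos_of_pos hx p).ne']

lemma mul_rpow_mul_rpow_neg_of_ker_le {m : Type*} {C : Matrix m n 𝕜} (hA : 0 ≤ A)
    (hker : ∀ v, A.mulVec v = 0 → C.mulVec v = 0) (p : ℝ) : C * (A ^ p * A ^ (-p)) = C := by
  refine Matrix.ext_iff_mulVec.2 fun v ↦ ?_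
  have hv : A.mulVec ((A ^ p * A ^ (-p)).mulVec v - v) = 0 := by
    rw [Matrix.mulVec_sub, Matrix.mulVec_mulVec, mul_rpow_mul_rpow_neg hA, sub_self]
  simpa [Matrix.mulVec_sub, sub_eq_zero] using hker _ hv

lemma trace_rpow_star_mul_self (C : Matrix n n 𝕜) (p : ℝ) :
    ((star C * C) ^ p).trace = ((C * star C) ^ p).trace := by
  rw [CFC.rpow_eq_cfc_real, CFC.rpow_eq_cfc_real]
  exact trace_cfc_eq_of_charpoly_eq (Matrix.isHermitian_conjTranspose_mul_self C)
    (Matrix.isHermitian_mul_conjTranspose_self C) (Matrix.charpoly_mul_comm _ _) _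

lemma re_trace_rpow_mono (hA : 0 ≤ A) (hAB : A ≤ B) (hp : 1 ≤ p) :
    RCLike.re (A ^ p).trace ≤ RCLike.re (B ^ p).trace := by
  have hB := hA.trans hAB
  have hmono := Real.monotoneOn_rpow_Ici_of_exponent_nonneg (zero_le_one.trans hp)
  rw [CFC.rpow_eq_cfc_real hA, CFC.rpow_eq_cfc_real hB]
  exact re_trace_cfc_mono (Matrix.nonneg_iff_posSemidef.1 hA).1
    (Matrix.nonneg_iff_posSemidef.1 hB).1 (convexOn_rpow hp) hmono
    (fun _ hx ↦ spectrum_nonneg_of_nonneg hA hx) (fun _ hx ↦ spectrum_nonneg_of_nonneg hB hx) hAB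

end Rpow

section RpowAntitone

variable {n : Type*} [Fintype n] [DecidableEq n] {A B : Matrix n n ℂ} {p : ℝ}

lemma rpow_half_mul_rpow_neg_mul_rpow_half_le_one (hA : 0 ≤ A) (hAB : A ≤ B)
    (hp : p ∈ Set.Ioc 0 1) : A ^ (p / 2) * B ^ (-p) * A ^ (p / 2) ≤ 1 := by
  have hB : 0 ≤ B := hA.trans hAB
  have hp0 : p ≠ 0 := hp.1.ne'
  set K := B ^ (-(p / 2)) * A ^ (p / 2)
  have hstar : star K = A ^ (p / 2) * B ^ (-(p / 2)) := by
    rw [star_mul, CFC.rpow_nonneg.star_eq, CFC.rpow_nonneg.star_eq]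
  have hKK : K * star K ≤ 1 := calc
    K * star K = B ^ (-(p / 2)) * A ^ p * B ^ (-(p / 2)) := by
      rw [hstar, mul_assoc, ← mul_assoc (A ^ (p / 2)), rpow_mul_rpow hA (by simpa),
        add_halves, ← mul_assoc]
    _ ≤ B ^ (-(p / 2)) * B ^ p * B ^ (-(p / 2)) :=
      conjugate_le_conjugate_of_nonneg (CFC.rpow_le_rpow ⟨hp.1.le, hp.2⟩ hAB) CFC.rpow_nonneg
    _ = B ^ (p / 2) * B ^ (-(p / 2)) := by
      rw [rpow_mul_rpow hB (by ring_nf; positivity)]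
      ring_nf
    _ ≤ 1 := rpow_mul_rpow_neg_le_one hB _
  calc A ^ (p / 2) * B ^ (-p) * A ^ (p / 2) = star K * K := by
        rw [hstar, mul_assoc, mul_assoc, ← mul_assoc (B ^ (-(p / 2))),
          rpow_mul_rpow hB (by simpa using hp0), ← neg_add, add_halves]
    _ ≤ 1 := star_mul_self_le_one_iff.2 hKK

lemma mul_rpow_neg_mul_star_anti {C : Matrix n n ℂ} (hA : 0 ≤ A) (hAB : A ≤ B)
    (hker : ∀ v, A.mulVec v = 0 → C.mulVec v = 0) (hp : p ∈ Set.Ioc 0 1) :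
    C * B ^ (-p) * star C ≤ C * A ^ (-p) * star C := by
  set D := C * A ^ (-(p / 2)) with hD
  have hstar : star D = A ^ (-(p / 2)) * star C := by
    rw [star_mul, CFC.rpow_nonneg.star_eq]
  have hC : C = D * A ^ (p / 2) := by
    rw [hD, mul_assoc]
    simpa using (mul_rpow_mul_rpow_neg_of_ker_le hA hker (-(p / 2))).symm
  calc C * B ^ (-p) * star C = D * (A ^ (p / 2) * B ^ (-p) * A ^ (p / 2)) * star D := by
        rw [hC, star_mul, CFC.rpow_nonneg.star_eq]
        simp only [mul_assoc]
    _ ≤ D * 1 * star D := star_right_conjugate_le_conjugate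
        (rpow_half_mul_rpow_neg_mul_rpow_half_le_one hA hAB hp) D
    _ = C * A ^ (-p) * star C := by
        rw [mul_one, hstar, hD, mul_assoc, ← mul_assoc (A ^ (-(p / 2))),
          rpow_mul_rpow hA (by simpa using hp.1.ne'), ← neg_add, add_halves, ← mul_assoc]

end RpowAntitone

section SandwichedRenyi

variable {d : ℕ} {A : Matrix (Fin d) (Fin d) ℂ}

lemma mfun_eq_cfc (f : ℝ → ℝ) (A : Matrix (Fin d) (Fin d) ℂ) : mfun f A = cfc f A := by
  unfold mfun
  split_ifs with hA
  · exact (hA.cfc_eq f).symm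
  · exact (cfc_apply_of_not_predicate A hA).symm

lemma mpow_eq_rpow (hA : 0 ≤ A) {p : ℝ} (hp : p ≠ 0) : mpow A p = A ^ p := by
  rw [mpow, mfun_eq_cfc, CFC.rpow_eq_cfc_real hA]
  congr! 2 with x
  split_ifs with hx
  · rw [hx, Real.zero_rpow hp]
  · rfl

variable {α : ℝ} {σ σ' τ : Matrix (Fin d) (Fin d) ℂ}

lemma sandR_eq_rtr_rpow (hα : 1 < α) (hσ : 0 ≤ σ) (hτ : 0 ≤ τ) :
    sandR α τ σ =
      rtr ((σ ^ (-(α - 1) / (2 * α)) * τ * σ ^ (-(α - 1) / (2 * α))) ^ α) := by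
  have hexp : -(α - 1) / (2 * α) ≠ 0 := div_ne_zero (by linarith) (by linarith)
  rw [sandR, mpow_eq_rpow hσ hexp,
    mpow_eq_rpow (conjugate_nonneg_of_nonneg hτ CFC.rpow_nonneg) (by linarith)]

lemma sandR_star_mul_self (hα : 1 < α) (hσ : 0 ≤ σ) (C : Matrix (Fin d) (Fin d) ℂ) :
    sandR α (star C * C) σ = rtr ((C * σ ^ (-((α - 1) / α)) * star C) ^ α) := by
  set q := -(α - 1) / (2 * α) with hq
  have hstar : star (C * σ ^ q) = σ ^ q * star C := by
    rw [star_mul, CFC.rpow_nonneg.star_eq]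
  have hqq : q + q = -((α - 1) / α) := by rw [hq]; field_simp; norm_num
  have hne : q + q ≠ 0 := hqq ▸ neg_ne_zero.2 (div_ne_zero (by linarith) (by linarith))
  have hinner : σ ^ q * (star C * C) * σ ^ q = star (C * σ ^ q) * (C * σ ^ q) := by
    simp only [hstar, mul_assoc]
  have houter : C * σ ^ q * star (C * σ ^ q) = C * σ ^ (-((α - 1) / α)) * star C := by
    rw [hstar, ← hqq, ← rpow_mul_rpow hσ hne]
    simp only [mul_assoc]
  rw [sandR_eq_rtr_rpow hα hσ (star_mul_self_nonneg C), hinner, rtr, trace_rpow_star_mul_self,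
    houter, rtr]

lemma sandR_anti_right (hα : 1 < α) (hτ : 0 ≤ τ) (hσ : 0 ≤ σ) (hσσ' : σ ≤ σ')
    (hsupp : suppSubset τ σ) : sandR α τ σ' ≤ sandR α τ σ := by
  obtain ⟨C, rfl⟩ := CStarAlgebra.nonneg_iff_eq_star_mul_self.1 hτ
  have hker (v : Fin d → ℂ) (hv : σ.mulVec v = 0) : C.mulVec v = 0 :=
    (Matrix.conjTranspose_mul_self_mulVec_eq_zero C v).1 (hsupp v hv)
  have hexp : (α - 1) / α ∈ Set.Ioc 0 1 :=
    ⟨div_pos (by linarith) (by linarith), (div_le_one (by linarith)).2 (by linarith)⟩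
  rw [sandR_star_mul_self hα (hσ.trans hσσ'), sandR_star_mul_self hα hσ]
  exact re_trace_rpow_mono (star_right_conjugate_nonneg CFC.rpow_nonneg C)
    (mul_rpow_neg_mul_star_anti hσ hσσ' hker hexp) hα.le

lemma sandR_self (hα : 1 < α) (hτ : 0 ≤ τ) : sandR α τ τ = rtr τ := by
  set q := -(α - 1) / (2 * α) with hq
  have hα0 : 0 < α := by linarith
  have hsum : q + 1 + q = 1 / α := by rw [hq]; field_simp; ring
  have hne : q + 1 ≠ 0 := by
    have hq1 : q + 1 = (α + 1) / (2 * α) := by rw [hq]; field_simp; ring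
    rw [hq1]
    positivity
  have hsandwich : τ ^ q * τ * τ ^ q = τ ^ (1 / α) := by
    nth_rw 2 [← CFC.rpow_one τ]
    rw [rpow_mul_rpow hτ hne, rpow_mul_rpow hτ (by rw [hsum]; positivity), hsum]
  rw [sandR_eq_rtr_rpow hα hτ hτ, hsandwich,
    CFC.rpow_rpow_of_exponent_nonneg τ _ _ (by positivity) (by positivity),
    one_div_mul_cancel hα0.ne', CFC.rpow_one τ]

lemma rtr_sum {I : Type*} (t : Finset I) (ρ : I → Matrix (Fin d) (Fin d) ℂ) :
    rtr (∑ i ∈ t, ρ i) = ∑ i ∈ t, rtr (ρ i) := by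
  simp only [rtr, Matrix.trace_sum, Complex.re_sum]

end SandwichedRenyi

/-- Summation inequality: `Σ_i R_α(ρ_i | Σ_j ρ_j) ≤ tr(Σ_j ρ_j)` for `α > 1`. -/
theorem stmt7 {d : ℕ} {I : Type*} [Fintype I]
    (ρ : I → Matrix (Fin d) (Fin d) ℂ) (hρ : ∀ i, (ρ i).PosSemidef)
    (α : ℝ) (hα : 1 < α) :
    ∑ i, sandR α (ρ i) (∑ j, ρ j) ≤ rtr (∑ j, ρ j) := by
  have hρ0 (i : I) : 0 ≤ ρ i := Matrix.nonneg_iff_posSemidef.2 (hρ i)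
  have hle (i : I) : ρ i ≤ ∑ j, ρ j :=
    Finset.single_le_sum (fun j _ ↦ hρ0 j) (Finset.mem_univ i)
  calc ∑ i, sandR α (ρ i) (∑ j, ρ j)
      ≤ ∑ i, sandR α (ρ i) (ρ i) := Finset.sum_le_sum fun i _ ↦
        sandR_anti_right hα (hρ0 i) (hρ0 i) (hle i) fun _ hv ↦ hv
    _ = ∑ i, rtr (ρ i) := Finset.sum_congr rfl fun i _ ↦ sandR_self hα (hρ0 i)
    _ = rtr (∑ j, ρ j) := (rtr_sum _ ρ).symm
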